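/- arXiv:2406.09465 — 2 statements merged into one kernel-verified Lean document; each statement's English description precedes it below -/
import Mathlib

section
/- Let G = (P, E) be a finite directed acyclic graph. A set of nodes P' ⊆ P forms a convex subgraph of G if and only if there exist two execution states P₁ and P₂ of G such that P' = P₁ \ P₂. -/
/-!
Execution states are exactly the sets closed under ancestors. A difference `P₁ \ P₂` of such sets
is convex: a node `q` between two of its members lies in `P₁` because its descendant does, and
not in `P₂` because its ancestor does not. Conversely, a convex `P'` equals `P₁ \ P₂`, where `P₁` is
the set of ancestors of `P'` (including `P'` itself) and `P₂ = P₁ \ P'`.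
-/

/-- `X` is an execution state of the directed graph with edge relation `E`:
for every edge `(p₁, p₂)`, if `p₂ ∈ X` then `p₁ ∈ X`. -/
def ExecState {V : Type*} (E : V → V → Prop) (X : Set V) : Prop :=
  ∀ p₁ p₂, E p₁ p₂ → p₂ ∈ X → p₁ ∈ X

/-- `P'` is a convex subgraph: there are no `p₁, p₂ ∈ P'` and `q ∉ P'` with
`p₁ ⤳ q` and `q ⤳ p₂` (reachability is the reflexive-transitive closure of `E`). -/
def ConvexSubgraph {V : Type*} (E : V → V → Prop) (P' : Set V) : Prop :=
  ¬ ∃ p₁ p₂ q, p₁ ∈ P' ∧ p₂ ∈ P' ∧ q ∉ P' ∧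
    Relation.ReflTransGen E p₁ q ∧ Relation.ReflTransGen E q p₂

/-- Execution states are closed under taking ancestors, not only direct predecessors. -/
theorem ExecState.mem_of_reach {V : Type*} {E : V → V → Prop} {X : Set V}
    (hX : ExecState E X) {a b : V} (hab : Relation.ReflTransGen E a b) (hb : b ∈ X) :
    a ∈ X := by
  induction hab using Relation.ReflTransGen.head_induction_on with
  | refl => exact hb
  | head hac _ ih => exact hX _ _ hac ih

/-- A set of nodes of a finite DAG forms a convex subgraph iff it is the
difference of two execution states. -/
theorem convexSubgraph_iff_diff_execStates {V : Type*} [Fintype V] (E : V → V → Prop)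
    (hacyclic : ∀ x y, Relation.ReflTransGen E x y → Relation.ReflTransGen E y x → x = y)
    (P' : Set V) :
    ConvexSubgraph E P' ↔
      ∃ P₁ P₂ : Set V, ExecState E P₁ ∧ ExecState E P₂ ∧ P' = P₁ \ P₂ := by
  constructor
  · intro h
    -- `P₁` is the set of ancestors of `P'`, and `P₂ = P₁ \ P'`; convexity is what makes
    -- `P₂` an execution state.
    refine ⟨{v | ∃ p ∈ P', Relation.ReflTransGen E v p},
      {v | v ∉ P' ∧ ∃ p ∈ P', Relation.ReflTransGen E v p}, ?_, ?_, ?_⟩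
    · rintro a b hab ⟨p, hp, hbp⟩
      exact ⟨p, hp, hbp.head hab⟩
    · rintro a b hab ⟨hb, p, hp, hbp⟩
      exact ⟨fun ha => h ⟨a, p, b, ha, hp, hb, .single hab, hbp⟩, p, hp, hbp.head hab⟩
    · ext v
      constructor
      · intro hv
        exact ⟨⟨v, hv, .refl⟩, fun hv₂ => hv₂.1 hv⟩
      · rintro ⟨hv₁, hv₂⟩
        by_contra hv
        exact hv₂ ⟨hv, hv₁⟩
  · rintro ⟨P₁, P₂, h₁, h₂, rfl⟩ ⟨a, b, q, ha, hb, hq, haq, hqb⟩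
    have hq₁ : q ∈ P₁ := h₁.mem_of_reach hqb hb.1
    exact hq ⟨hq₁, fun hq₂ => ha.2 (h₂.mem_of_reach haq hq₂)⟩
end

section
/- Let G = (P, E) be a finite directed acyclic graph. If P' ⊆ P is a convex subgraph of G, then there exist execution states P₁ and P₂ of G with P' = P₁ \ P₂; concretely, one may take P₁ to be the union of P' with all nodes from which some node of P' is reachable, and P₂ to be the set of all nodes from which some node of S is reachable, where S = {p ∈ P \ P' : there exists an edge (p, p') ∈ E with p' ∈ P'}. -/
/-- A path from outside `P'` into `P'` passes through the source of an edge entering `P'`. -/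
lemma exists_entry_edge {V : Type*} {E : V → V → Prop} {P' : Set V} {x y : V}
    (h : Relation.ReflTransGen E x y) (hy : y ∈ P') (hx : x ∉ P') :
    ∃ s ∈ ({p | p ∉ P' ∧ ∃ p' ∈ P', E p p'} : Set V), Relation.ReflTransGen E x s := by
  induction h with
  | refl => exact absurd hy hx
  | @tail b c hxb hbc ih =>
    by_cases hb : b ∈ P'
    · exact ih hb
    · exact ⟨b, ⟨hb, c, hy, hbc⟩, hxb⟩

/-- In a finite DAG, a convex subgraph `P'` is the difference of two concrete
execution states: `P₁ = P' ∪ {nodes from which some node of P' is reachable}` and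
`P₂ = {nodes from which some node of S is reachable}`, where
`S = {p ∉ P' : ∃ edge (p, p') ∈ E with p' ∈ P'}`. -/
theorem convexSubgraph_eq_diff_execStates {V : Type*} [Fintype V] (E : V → V → Prop)
    (hacyclic : ∀ x y, Relation.ReflTransGen E x y → Relation.ReflTransGen E y x → x = y)
    (P' : Set V) (hconv : ConvexSubgraph E P') :
    ExecState E (P' ∪ {p | ∃ p' ∈ P', Relation.ReflTransGen E p p'}) ∧
    ExecState E {p | ∃ s ∈ ({p | p ∉ P' ∧ ∃ p' ∈ P', E p p'} : Set V),
      Relation.ReflTransGen E p s} ∧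
    P' = (P' ∪ {p | ∃ p' ∈ P', Relation.ReflTransGen E p p'}) \
      {p | ∃ s ∈ ({p | p ∉ P' ∧ ∃ p' ∈ P', E p p'} : Set V),
        Relation.ReflTransGen E p s} := by
  refine ⟨?_, ?_, ?_⟩
  · rintro p₁ p₂ he (h | ⟨p', hp', h⟩)
    · exact Or.inr ⟨p₂, h, .single he⟩
    · exact Or.inr ⟨p', hp', .head he h⟩
  · rintro p₁ p₂ he ⟨s, hs, h⟩
    exact ⟨s, hs, .head he h⟩
  · ext x
    constructor
    · rintro hx
      refine ⟨Or.inl hx, ?_⟩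
      -- Otherwise `x ⤳ s` and `s → p'` with `x, p' ∈ P'` and `s ∉ P'`.
      rintro ⟨s, ⟨hs, p', hp', he⟩, h⟩
      exact hconv ⟨x, p', s, hx, hp', hs, h, .single he⟩
    · rintro ⟨hx | ⟨p', hp', h⟩, hn⟩
      · exact hx
      · by_contra hx
        exact hn (exists_entry_edge h hp' hx)
end
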